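/- (Right Pieri rule for colored immaculate functions) For a sentence J=(v_1,…,v_h) and a word w, 𝔖_J·H_w = Σ_{J ⊂_w K} 𝔖_K, where the sum runs over all sentences K=(u_1,…,u_g) such that J ⊂_w K, i.e., g ≤ h+1 (setting v_{h+1}=∅) and u_j = v_j·q_j for 1 ≤ j ≤ g for words q_j (possibly empty) with q_g·q_{g−1}⋯q_2·q_1 = w. -/

import Mathlib

open scoped BigOperators

namespace ColoredImm

variable {A : Type*}

/-- A *weak sentence* over the alphabet `A`: a finite list of words (words may be empty). -/
abbrev Sentence (A : Type*) := List (List A)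

/-- A genuine *sentence*: all of its words are nonempty. -/
def IsSentence (I : Sentence A) : Prop := ∀ w ∈ I, w ≠ []

/-- The size `|I|` of a sentence: its total number of letters. -/
def size (I : Sentence A) : ℕ := (I.map List.length).sum

/-- The word lengths `wℓ(I)` of a sentence. -/
def wl (I : Sentence A) : List ℕ := I.map List.length

/-- The flattening of a weak sentence: delete all empty words. -/
def flattenWS (I : Sentence A) : Sentence A := I.filter (fun w => !w.isEmpty)

/-- `Refines J I` means `J ⪯ I`: the sentence `I` can be obtained by concatenating
some adjacent words of `J` (so `J` is a refinement of `I`, and `I` a coarsening of `J`). -/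
def Refines (J I : Sentence A) : Prop :=
  ∃ P : List (Sentence A), (∀ p ∈ P, p ≠ []) ∧ P.flatten = J ∧ P.map List.flatten = I

/-! ### Fillings and colored immaculate tableaux -/

/-- An integer filling of a diagram, recorded row by row. -/
abbrev Filling := List (List ℕ)

/-- The entry of a filling at box `b = (row, column)` (0-indexed), with default `0`. -/
def entryAt (f : Filling) (b : ℕ × ℕ) : ℕ := (f.getD b.1 []).getD b.2 0

/-- `IsCIT I f`: `f` is a colored immaculate tableau of shape `I`; that is, `f` has the
same shape as the colored composition diagram of `I`, its entries are positive integers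
weakly increasing left to right along each row, and the entries in the first column are
strictly increasing from top to bottom. -/
def IsCIT (I : Sentence A) (f : Filling) : Prop :=
  f.map List.length = I.map List.length ∧
  (∀ row ∈ f, row.Chain' (· ≤ ·)) ∧
  (f.filterMap List.head?).Chain' (· < ·) ∧
  (∀ x ∈ f.flatten, 1 ≤ x)

/-- The colors (letters of `w`) of the boxes of one row whose entry (in `row`) is `v`,
read from left to right. -/
def rowWith (w : List A) (row : List ℕ) (v : ℕ) : List A :=
  ((w.zip row).filter (fun p => p.2 == v)).map Prod.fst

/-- The word of the type of a tableau at value `v`: the colors of all boxes with entry `v`,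
read left to right, from the bottom row up to the top row. -/
def typeWord (I : Sentence A) (f : Filling) (v : ℕ) : List A :=
  (((I.zip f).reverse).map (fun p => rowWith p.1 p.2 v)).flatten

/-- `HasType I f B` : the tableau `f` (of shape `I`) has type the weak sentence `B`,
i.e. for every positive integer `v`, the colors of the boxes of `f` containing `v`
(read left to right, bottom to top) form the `v`-th word of `B`. -/
def HasType (I : Sentence A) (f : Filling) (B : Sentence A) : Prop :=
  ∀ v, 1 ≤ v → typeWord I f v = B.getD (v - 1) []

/-- `K_{J,B}`: the number of colored immaculate tableaux of shape `J` and type `B`. -/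
noncomputable def KJB (J B : Sentence A) : ℕ :=
  Set.ncard {f : Filling | IsCIT J f ∧ HasType J f B}

/-! ### Standardization -/

/-- The list of boxes of a filling. -/
def boxes (f : Filling) : List (ℕ × ℕ) :=
  ((List.range f.length).map
    (fun r => (List.range (f.getD r []).length).map (fun j => (r, j)))).flatten

/-- `beforeB f b b'`: box `b` comes strictly before box `b'` in the type-reading order of `f`
(smaller entries first; among equal entries, lower rows first, and within a row left to right). -/
def beforeB (f : Filling) (b b' : ℕ × ℕ) : Bool :=
  entryAt f b < entryAt f b' ||
    (entryAt f b == entryAt f b' && (b'.1 < b.1 || (b.1 == b'.1 && b.2 < b'.2)))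

/-- The standardization of a filling: each box is renumbered (starting from `1`)
according to its position in the type-reading order. -/
def stdFill (f : Filling) : Filling :=
  (List.range f.length).map (fun r =>
    (List.range (f.getD r []).length).map (fun j =>
      1 + ((boxes f).filter (fun b' => beforeB f b' (r, j))).length))

/-- The number of boxes of a filling. -/
def nBoxes (f : Filling) : ℕ := f.flatten.length

/-- A filling of `n` boxes is standard when its entries are exactly `1, …, n`,
each appearing once. -/
def IsStandardF (f : Filling) : Prop := f.flatten.Perm (List.range' 1 (nBoxes f))

/-! ### Descents and the colored descent composition -/

/-- The (0-indexed) row containing the value `v` in a standard filling. -/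
def rowOf (f : Filling) (v : ℕ) : ℕ := f.findIdx (fun row => row.contains v)

/-- The sorted list of descents of a standard filling: those `i` with `1 ≤ i ≤ n-1`
such that `i+1` lies in a strictly lower row than `i`. -/
def descList (f : Filling) : List ℕ :=
  (List.range' 1 (nBoxes f - 1)).filter (fun i => decide (rowOf f i < rowOf f (i + 1)))

/-- The composition of `n` associated to a set of split positions `d_1 < … < d_k`:
`(d_1, d_2 - d_1, …, n - d_k)`. -/
def compOf (ds : List ℕ) (n : ℕ) : List ℕ :=
  List.zipWith (fun a b => b - a) (0 :: ds) (ds ++ [n])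

/-- Split a word into a sentence according to a composition. -/
def splitByComp : List A → List ℕ → List (List A)
  | _, [] => []
  | w, a :: rest => w.take a :: splitByComp (w.drop a) rest

/-- The color of the box containing the value `v` in a standard filling of shape `I`. -/
def colorOf [Inhabited A] (I : Sentence A) (f : Filling) (v : ℕ) : A :=
  (I.getD (rowOf f v) []).getD ((f.getD (rowOf f v) []).findIdx (fun x => x == v)) default

/-- The maximal word of the colored descent composition of a standard filling of shape `I`:
the colors of its boxes read in the order of their integer entries. -/
def readWord [Inhabited A] (I : Sentence A) (f : Filling) : List A :=
  (List.range (nBoxes f)).map (fun i => colorOf I f (i + 1))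

/-- The colored descent composition `co_A(U)` of a standard colored immaculate tableau:
read the colors of the boxes in the order of their entries, starting a new word
immediately after each descent. -/
def coA [Inhabited A] (I : Sentence A) (f : Filling) : Sentence A :=
  if nBoxes f = 0 then [] else splitByComp (readWord I f) (compOf (descList f) (nBoxes f))

/-- `L_{J,C}`: the number of standard colored immaculate tableaux of shape `J`
with colored descent composition `C`. -/
noncomputable def LJC [Inhabited A] (J C : Sentence A) : ℕ :=
  Set.ncard {f : Filling | IsCIT J f ∧ IsStandardF f ∧ coA J f = C}

/-! ### The colored quasisymmetric functions `QSym_A` -/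

/-- A (normal form of a) monomial in the partially commutative variables `x_{a,i}`:
a pair consisting of the list of words `(w_1, …, w_m)` and the list of (strictly
increasing, positive) second indices `(j_1 < … < j_m)`, representing
`x_{w_1,j_1} ⋯ x_{w_m,j_m}`. -/
abbrev Mono (A : Type*) := List (List A) × List ℕ

/-- A colored quasisymmetric "series": a formal linear combination of monomials,
recorded by its coefficient function.  `QSym_A` itself is the span of the colored
monomial functions `MQ I` inside this space. -/
abbrev QSymA (A : Type*) := Mono A → ℚ

/-- Validity of a monomial normal form: words and indices match up, the indices are
strictly increasing positive integers, and all words are nonempty. -/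
def ValidMono (m : Mono A) : Prop :=
  m.1.length = m.2.length ∧ m.2.Chain' (· < ·) ∧ (∀ j ∈ m.2, 1 ≤ j) ∧ ∀ w ∈ m.1, w ≠ []

open Classical in
/-- The colored monomial quasisymmetric function `M_I`: the sum of all monomials
`x_{w_1,j_1} ⋯ x_{w_m,j_m}` with `j_1 < … < j_m`, where `I = (w_1, …, w_m)`. -/
noncomputable def MQ (I : Sentence A) : QSymA A := fun m =>
  if m.1 = I ∧ ValidMono m then 1 else 0

/-- The largest entry of a filling. -/
def maxEntry (f : Filling) : ℕ := f.flatten.foldr max 0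

/-- The monomial `x_T` of a colored immaculate tableau `T = f` of shape `I`:
for `T` of type `B = (u_1, …, u_j)` it is `x_{u_1,1} x_{u_2,2} ⋯ x_{u_j,j}`
(empty words are skipped). -/
def monoOf (I : Sentence A) (f : Filling) : Mono A :=
  let vs := ((List.range (maxEntry f)).map (· + 1)).filter (fun v => !(typeWord I f v).isEmpty)
  (vs.map (typeWord I f), vs)

/-- The colored dual immaculate function `𝔖*_J = Σ_T x_T`, the sum of the monomials of all
colored immaculate tableaux `T` of shape `J` (its coefficient at a monomial `m` is the
number of such tableaux with `x_T = m`). -/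
noncomputable def dualImm (J : Sentence A) : QSymA A := fun m =>
  (Set.ncard {f : Filling | IsCIT J f ∧ monoOf J f = m} : ℚ)

/-- The colored fundamental quasisymmetric function `F_I = Σ_{J ⪯ I} M_J`. -/
noncomputable def FQ (I : Sentence A) : QSymA A :=
  ∑ᶠ J ∈ {J : Sentence A | Refines J I}, MQ J

/-! ### The colored immaculate descent graph -/

/-- Edges of the colored immaculate descent graph: a directed edge from `I` to `J` (`J ≠ I`)
whenever some standard colored immaculate tableau of shape `I` has colored descent
composition `J`. -/
def IsEdge [Inhabited A] (I J : Sentence A) : Prop := J ≠ I ∧ LJC I J ≠ 0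

/-- Directed paths from `I` to `K` in the colored immaculate descent graph, recorded by
their (nonempty) lists of successive vertices; the path `[I]` is the empty path at `I`. -/
def PathsFromTo [Inhabited A] (I K : Sentence A) : Set (List (Sentence A)) :=
  {p | p.head? = some I ∧ p.getLast? = some K ∧ p.Chain' IsEdge}

/-- The signed weight `(-1)^{ℓ(𝒫)} prod(𝒫)` of a directed path `𝒫`:
`ℓ(𝒫)` is its number of edges and `prod(𝒫)` the product of its edge weights `L_{I,J}`. -/
noncomputable def pathWeight [Inhabited A] (p : List (Sentence A)) : ℚ :=
  ((-1 : ℚ)) ^ (p.length - 1) * ((p.zip p.tail).map (fun e => (LJC e.1 e.2 : ℚ))).prod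

/-- `L⁻¹_{I,K} = Σ_𝒫 (-1)^{ℓ(𝒫)} prod(𝒫)`, summed over all directed paths `𝒫`
from `I` to `K` in the colored immaculate descent graph. -/
noncomputable def Linv [Inhabited A] (I K : Sentence A) : ℚ :=
  ∑ᶠ p ∈ PathsFromTo I K, pathWeight p

/-! ### The colored noncommutative symmetric functions `NSym_A` -/

/-- A formal series over the complete homogeneous basis `{H_I}` of `NSym_A`, recorded by its
coefficient function on (weak) sentences.  `NSym_A` itself consists of the finitely
supported elements supported on genuine sentences; see `InNSym`. -/
abbrev NSymA (A : Type*) := Sentence A → ℚ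

/-- Membership in `NSym_A` proper: finitely supported, and supported on genuine sentences. -/
def InNSym (f : NSymA A) : Prop :=
  (Function.support f).Finite ∧ ∀ I, f I ≠ 0 → IsSentence I

open Classical in
/-- The colored complete homogeneous noncommutative symmetric function
`H_I = H_{w_1} ⋯ H_{w_k}`. -/
noncomputable def Hd (I : Sentence A) : NSymA A := fun J => if J = I then 1 else 0

/-- `H_w` for a single word `w`, with `H_∅ = 1`. -/
noncomputable def Hw (w : List A) : NSymA A := if w.isEmpty then Hd [] else Hd [w]

/-- Multiplication in `NSym_A` (the concatenation product, extended to series):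
`H_I · H_J = H_{I ⬝ J}`. -/
def mulN (f g : NSymA A) : NSymA A := fun I =>
  ∑ j ∈ Finset.range (I.length + 1), f (I.take j) * g (I.drop j)

/-- The duality pairing `⟨·,·⟩ : NSym_A × QSym_A → ℚ`, determined by
`⟨H_I, M_J⟩ = δ_{I,J}`: the `M_I`-coefficient of a quasisymmetric function is its
coefficient on the monomial `x_{w_1,1} x_{w_2,2} ⋯ x_{w_k,k}`. -/
noncomputable def pairNQ (G : NSymA A) (F : QSymA A) : ℚ :=
  ∑ᶠ I ∈ {I : Sentence A | IsSentence I}, G I * F (I, List.range' 1 I.length)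

/-- All ways of splitting each word of a list of words into a prefix and a suffix. -/
def splitsOf : List (List A) → List (List (List A) × List (List A))
  | [] => [([], [])]
  | w :: ws =>
      (((splitsOf ws).map (fun p =>
        (List.range (w.length + 1)).map (fun t => (w.take t :: p.1, w.drop t :: p.2))))).flatten

/-- Restriction of a candidate monomial: keep only the nonempty words together with
their indices. -/
def restrictMono (ws : List (List A)) (js : List ℕ) : Mono A :=
  let ps := (ws.zip js).filter (fun p => !p.1.isEmpty)
  (ps.map Prod.fst, ps.map Prod.snd)

/-- The product of colored quasisymmetric series: the coefficient of a monomial in `F·G`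
is the sum, over all ways of writing each of its words as a concatenation of a word of a
monomial of `F` (on the left) and a word of a monomial of `G` (on the right), of the
products of the corresponding coefficients. -/
def mulQ (F G : QSymA A) : QSymA A := fun m =>
  ((splitsOf m.1).map (fun p => F (restrictMono p.1 m.2) * G (restrictMono p.2 m.2))).sum

/-- The right perp operator `M^⊸` of `M ∈ QSym_A`, the linear operator on `NSym_A`
determined by `⟨M^⊸(H), G⟩ = ⟨H, G·M⟩`; explicitly, for the dual bases `{M_I}` and `{H_I}`,
`M^⊸(H) = Σ_I ⟨H, M_I · M⟩ H_I`. -/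
noncomputable def rperp (M : QSymA A) (H : NSymA A) : NSymA A :=
  ∑ᶠ I ∈ {I : Sentence A | IsSentence I}, pairNQ H (mulQ (MQ I) M) • Hd I

/-- The colored noncommutative Bernstein operator
`𝔹_v = Σ_u Σ_{Q : w(Q^r) = u} (-1)^{ℓ(Q)} H_{v·u} · (Σ_{S ⪰ Q} M_S^⊸)`,
where `Q` runs over all sentences, `u = w(Q^r)` is the concatenation of the words of `Q`
in reverse order, and `S` runs over all coarsenings of `Q`. -/
noncomputable def Bern (v : List A) (f : NSymA A) : NSymA A :=
  ∑ᶠ Q ∈ {Q : Sentence A | IsSentence Q},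
    ((-1 : ℚ)) ^ Q.length •
      mulN (Hw (v ++ Q.reverse.flatten))
        (∑ᶠ S ∈ {S : Sentence A | Refines Q S}, rperp (MQ S) f)

/-- The colored immaculate function `𝔖_J = 𝔹_{v_1} 𝔹_{v_2} ⋯ 𝔹_{v_h}(1)`. -/
noncomputable def ImmS (J : Sentence A) : NSymA A := J.foldr Bern (Hd [])

/-- The colored ribbon function `R_I = Σ_{J ⪰ I} (-1)^{ℓ(J) - ℓ(I)} H_J`. -/
noncomputable def Rib (I : Sentence A) : NSymA A :=
  ∑ᶠ J ∈ {J : Sentence A | Refines I J}, ((-1 : ℚ)) ^ (I.length - J.length) • Hd J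

/-- The Pieri relation `J ⊂_w K` for a sentence `J = (v_1, …, v_h)` and a word `w`:
`K = (u_1, …, u_g)` with `h ≤ g ≤ h+1` (setting `v_{h+1} = ∅`) and `u_j = v_j · q_j`
for words `q_j` (possibly empty) whose reversed concatenation `q_g ⋯ q_1` equals `w`. -/
def PieriRel (J : Sentence A) (w : List A) (K : Sentence A) : Prop :=
  J.length ≤ K.length ∧ K.length ≤ J.length + 1 ∧
  ∃ q : List (List A), q.length = K.length ∧ q.reverse.flatten = w ∧
    ∀ j < K.length, K.getD j [] = J.getD j [] ++ q.getD j []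

/-- Right containment of a weak sentence `K` in `J`: same length, and each word of `K` is a
suffix of the corresponding word of `J`. -/
def RightContained (K J : Sentence A) : Prop :=
  K.length = J.length ∧ ∀ i < J.length, (K.getD i []).IsSuffix (J.getD i [])

/-- The weak sentence `J/_R K`: remove each word of `K` from the right end of the
corresponding word of `J`. -/
def rightQuot (J K : Sentence A) : Sentence A :=
  List.zipWith (fun v u => v.take (v.length - u.length)) J K

/-- Left containment `J ⊆_L I`: `ℓ(J) ≤ ℓ(I)` and each word of `J` is a prefix of the
corresponding word of `I`. -/
def LeftContained (J I : Sentence A) : Prop :=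
  J.length ≤ I.length ∧ ∀ i < J.length, (J.getD i []).IsPrefix (I.getD i [])

/-- A skew colored immaculate tableau of shape `I/J`: a filling of the active boxes
(the `i`-th row keeps the last `|w_i| - |v_i|` boxes) with positive integers, rows weakly
increasing left to right, and the entries in the (active part of the) first column of `I`
strictly increasing top to bottom. -/
def IsSkewCIT (I J : Sentence A) (f : Filling) : Prop :=
  f.map List.length =
    (List.range I.length).map (fun i => (I.getD i []).length - (J.getD i []).length) ∧
  (∀ row ∈ f, row.Chain' (· ≤ ·)) ∧
  ((List.range I.length).filterMap
    (fun i => if (J.getD i []).length = 0 then (f.getD i []).head? else none)).Chain' (· < ·) ∧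
  (∀ x ∈ f.flatten, 1 ≤ x)

/-- The word of the type of a skew tableau at value `v`: the colors of the active boxes with
entry `v`, read left to right, bottom to top. -/
def skewTypeWord (I J : Sentence A) (f : Filling) (v : ℕ) : List A :=
  (((List.range I.length).reverse).map (fun i =>
    rowWith ((I.getD i []).drop (J.getD i []).length) (f.getD i []) v)).flatten

/-- `SkewHasType I J f K` : the skew tableau `f` of shape `I/J` has type `K`. -/
def SkewHasType (I J : Sentence A) (f : Filling) (K : Sentence A) : Prop :=
  ∀ v, 1 ≤ v → skewTypeWord I J f v = K.getD (v - 1) []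

/-! ### The complement involution `ψ` and the row-strict functions -/

/-- The complement `I^c` of a sentence: the unique sentence with the same maximal word
that splits exactly where `I` does not. -/
def complSent (I : Sentence A) : Sentence A :=
  let w := I.flatten
  let n := w.length
  if n = 0 then []
  else
    let splits := (((wl I).scanl (· + ·) 0).drop 1).dropLast
    let csplits := (List.range' 1 (n - 1)).filter (fun i => !(splits.contains i))
    splitByComp w (compOf csplits n)

/-- The `M_I`-coefficient of a colored quasisymmetric function. -/
noncomputable def coeffM (G : QSymA A) (I : Sentence A) : ℚ := G (I, List.range' 1 I.length)

/-- The image of `M_I` under `ψ`, via `M_I = Σ_{J ⪯ I} (-1)^{ℓ(J)-ℓ(I)} F_J` and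
`ψ(F_J) = F_{J^c}`. -/
noncomputable def psiM (I : Sentence A) : QSymA A :=
  ∑ᶠ J ∈ {J : Sentence A | Refines J I}, ((-1 : ℚ)) ^ (J.length - I.length) • FQ (complSent J)

/-- The linear involution `ψ` of `QSym_A`, determined by `ψ(F_I) = F_{I^c}`. -/
noncomputable def psiQ (G : QSymA A) : QSymA A :=
  ∑ᶠ I ∈ {I : Sentence A | IsSentence I}, coeffM G I • psiM I

/-- A colored row-strict immaculate tableau of shape `I`: entries strictly increase left to
right along each row and weakly increase top to bottom down the first column. -/
def IsCRSIT (I : Sentence A) (f : Filling) : Prop :=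
  f.map List.length = I.map List.length ∧
  (∀ row ∈ f, row.Chain' (· < ·)) ∧
  (f.filterMap List.head?).Chain' (· ≤ ·) ∧
  (∀ x ∈ f.flatten, 1 ≤ x)

/-- The word of the type of a row-strict tableau at value `v`: the colors of the boxes with
entry `v`, read left to right, top to bottom. -/
def rsTypeWord (I : Sentence A) (f : Filling) (v : ℕ) : List A :=
  ((I.zip f).map (fun p => rowWith p.1 p.2 v)).flatten

/-- The monomial `x_T` of a colored row-strict immaculate tableau. -/
def rsMonoOf (I : Sentence A) (f : Filling) : Mono A :=
  let vs := ((List.range (maxEntry f)).map (· + 1)).filter (fun v => !(rsTypeWord I f v).isEmpty)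
  (vs.map (rsTypeWord I f), vs)

/-- The colored row-strict dual immaculate function `ℛ𝔖*_J = Σ_T x_T`, summed over all
colored row-strict immaculate tableaux `T` of shape `J`. -/
noncomputable def rsDualImm (J : Sentence A) : QSymA A := fun m =>
  (Set.ncard {f : Filling | IsCRSIT J f ∧ rsMonoOf J f = m} : ℚ)

/-- `α ⪰ β` in the reverse lexicographic order on compositions: at the first index where
they differ, `α` has the *smaller* entry (padding with zeros). -/
def RevLexGE (α β : List ℕ) : Prop :=
  α = β ∨ ∃ i, (∀ j < i, α.getD j 0 = β.getD j 0) ∧ α.getD i 0 < β.getD i 0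

/-! ### Uncolored (ordinary) versions, for `QSym` -/

namespace Uncolored

/-- A composition: a list of positive integers. -/
def IsComposition (α : List ℕ) : Prop := ∀ a ∈ α, 1 ≤ a

/-- `β ⪯ α`: the composition `α` is obtained by summing adjacent parts of `β`. -/
def RefinesC (β α : List ℕ) : Prop :=
  ∃ P : List (List ℕ), (∀ p ∈ P, p ≠ []) ∧ P.flatten = β ∧ P.map List.sum = α

/-- A monomial `x_{i_1}^{a_1} ⋯ x_{i_m}^{a_m}` recorded by its exponents and its
strictly increasing positive indices. -/
abbrev MonoU := List ℕ × List ℕ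

/-- A quasisymmetric "series", recorded by its coefficient function on monomials.
`QSym` is the span of the monomial functions `MU α` inside this space. -/
abbrev QSymU := MonoU → ℚ

/-- Validity of a monomial: matching lengths, strictly increasing positive indices,
positive exponents. -/
def ValidMonoU (m : MonoU) : Prop :=
  m.1.length = m.2.length ∧ m.2.Chain' (· < ·) ∧ (∀ j ∈ m.2, 1 ≤ j) ∧ ∀ a ∈ m.1, 1 ≤ a

open Classical in
/-- The monomial quasisymmetric function `M_α`. -/
noncomputable def MU (α : List ℕ) : QSymU := fun m =>
  if m.1 = α ∧ ValidMonoU m then 1 else 0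

/-- The fundamental quasisymmetric function `F_α = Σ_{β ⪯ α} M_β`. -/
noncomputable def FU (α : List ℕ) : QSymU :=
  ∑ᶠ β ∈ {β : List ℕ | RefinesC β α}, MU β

/-- An immaculate tableau of shape `α`: positive integer entries, rows weakly increasing
left to right, first column strictly increasing top to bottom. -/
def IsIT (α : List ℕ) (f : Filling) : Prop :=
  f.map List.length = α ∧
  (∀ row ∈ f, row.Chain' (· ≤ ·)) ∧
  (f.filterMap List.head?).Chain' (· < ·) ∧
  (∀ x ∈ f.flatten, 1 ≤ x)

/-- The number of boxes of `f` with entry `v`. -/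
def countOf (f : Filling) (v : ℕ) : ℕ := (f.flatten.filter (fun x => x == v)).length

/-- The monomial `x^T` of an immaculate tableau `T` of type `β`:
`x_1^{β_1} ⋯ x_h^{β_h}` (zero exponents skipped). -/
def monoOfU (f : Filling) : MonoU :=
  let vs := ((List.range (maxEntry f)).map (· + 1)).filter (fun v => decide (countOf f v ≠ 0))
  (vs.map (countOf f), vs)

/-- The dual immaculate function `𝔖*_α = Σ_T x^T`, summed over all immaculate tableaux
of shape `α`. -/
noncomputable def dualImmU (α : List ℕ) : QSymU := fun m =>
  (Set.ncard {f : Filling | IsIT α f ∧ monoOfU f = m} : ℚ)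

/-- The descent composition `co(U)` of a standard immaculate tableau. -/
def descComp (f : Filling) : List ℕ :=
  if nBoxes f = 0 then [] else compOf (descList f) (nBoxes f)

/-- `L_{α,β}`: the number of standard immaculate tableaux of shape `α` with descent
composition `β`. -/
noncomputable def LU (α β : List ℕ) : ℕ :=
  Set.ncard {f : Filling | IsIT α f ∧ IsStandardF f ∧ descComp f = β}

/-- Edges of the immaculate descent graph `𝔇^n`. -/
def IsEdgeU (α β : List ℕ) : Prop := β ≠ α ∧ LU α β ≠ 0

/-- Directed paths from `α` to `β` in the immaculate descent graph, recorded by their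
lists of successive vertices; `[α]` is the empty path at `α`. -/
def PathsU (α β : List ℕ) : Set (List (List ℕ)) :=
  {p | p.head? = some α ∧ p.getLast? = some β ∧ p.Chain' IsEdgeU}

/-- The signed weight `(-1)^{ℓ(𝒫)} prod(𝒫)` of a path. -/
noncomputable def pathWeightU (p : List (List ℕ)) : ℚ :=
  ((-1 : ℚ)) ^ (p.length - 1) * ((p.zip p.tail).map (fun e => (LU e.1 e.2 : ℚ))).prod

/-- `L⁻¹_{α,β} = Σ_𝒫 (-1)^{ℓ(𝒫)} prod(𝒫)`, over directed paths from `α` to `β` in `𝔇^n`. -/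
noncomputable def LinvU (α β : List ℕ) : ℚ :=
  ∑ᶠ p ∈ PathsU α β, pathWeightU p

end Uncolored

end ColoredImm

namespace ColoredImm

/-!
The signed sum `w ↦ Σ_Q (-1)^ℓ(Q) w(Q^r)` over the sentences `Q` that concatenate to `w` is inverse
to `w ↦ w` for the convolution that splits `w` as `p·q` and multiplies the images in the opposite
order. In `Σ_{w = p·q} 𝔹_{v·q}(f · H_p)`, the coproduct splits `p` as `x·s` and the refinements of
`s` contribute such a signed sum, so for fixed `x` everything cancels unless `x = w`. This is the
commutation rule `𝔹_v(f) · H_w = Σ_{w = p·q} 𝔹_{v·q}(f · H_p)`. Iterating it moves successive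
suffixes of `w` onto `v_1, v_2, …`, and the prefix left at the end becomes a new word through
`𝔹_p(1) = H_p`.
-/

section Sums

variable {ι κ M : Type*} [AddCommMonoid M]

theorem sum_map_flatMap (L : List ι) (g : ι → List κ) (f : κ → M) :
    ((L.flatMap g).map f).sum = (L.map fun i => ((g i).map f).sum).sum := by
  rw [List.map_flatMap, List.flatMap_def, List.sum_flatten, List.map_map]
  rfl

theorem sum_map_sum_map_comm (L : List ι) (L' : List κ) (f : ι → κ → M) :
    (L.map fun i => (L'.map fun k => f i k).sum).sum =
      (L'.map fun k => (L.map fun i => f i k).sum).sum := by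
  simpa using Multiset.sum_map_sum_map (L : Multiset ι) (L' : Multiset κ) (f := f)

theorem sum_map_range (n : ℕ) (f : ℕ → M) :
    ((List.range n).map f).sum = ∑ t ∈ Finset.range n, f t :=
  rfl

theorem finsum_mem_eq_sum_map {s : Set ι} {L : List ι} (hL : L.Nodup) (h : ∀ i, i ∈ L ↔ i ∈ s)
    (f : ι → M) : ∑ᶠ i ∈ s, f i = (L.map f).sum := by
  classical
  have hs : s = ↑L.toFinset := by ext i; simp [h]
  rw [hs, finsum_mem_coe_finset, List.sum_toFinset _ hL]

theorem finsum_mem_sum_ite {s : Set ι} {t : Finset κ} {r : κ → ι → Prop}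
    [∀ k i, Decidable (r k i)] {L : κ → Finset ι} (hL : ∀ k ∈ t, ∀ i, i ∈ L k ↔ i ∈ s ∧ r k i)
    (g : κ → ι → M) :
    ∑ᶠ i ∈ s, ∑ k ∈ t, (if r k i then g k i else 0) = ∑ k ∈ t, ∑ i ∈ L k, g k i := by
  classical
  have hterm (i : ι) : (∑ᶠ _ : i ∈ s, ∑ k ∈ t, if r k i then g k i else 0) =
      ∑ k ∈ t, if i ∈ L k then g k i else 0 := by
    by_cases hi : i ∈ s
    · rw [finsum_eq_if, if_pos hi]
      exact Finset.sum_congr rfl fun k hk => if_congr (by simp [hL k hk, hi]) rfl rfl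
    · rw [finsum_eq_if, if_neg hi, Finset.sum_eq_zero]
      exact fun k hk => if_neg (by simp [hL k hk, hi])
  have hsupp (k : κ) : (Function.support fun i => if i ∈ L k then g k i else 0) ⊆ L k := by
    intro i hi
    by_contra h
    exact hi (if_neg h)
  simp only [hterm]
  rw [finsum_sum_comm _ _ fun k _ => (L k).finite_toSet.subset (hsupp k)]
  refine Finset.sum_congr rfl fun k _ => ?_
  rw [finsum_eq_sum_of_support_subset _ (hsupp k), Finset.sum_ite_mem, Finset.inter_self]

end Sums

section Words

variable {A : Type*}

theorem isSentence_nil : IsSentence ([] : Sentence A) := by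
  simp [IsSentence]

theorem isSentence_cons {w : List A} {I : Sentence A} :
    IsSentence (w :: I) ↔ w ≠ [] ∧ IsSentence I :=
  List.forall_mem_cons

theorem isSentence_append {I J : Sentence A} :
    IsSentence (I ++ J) ↔ IsSentence I ∧ IsSentence J :=
  List.forall_mem_append

theorem IsSentence.eq_nil_of_flatten_eq_nil {I : Sentence A} (hI : IsSentence I)
    (h : I.flatten = []) : I = [] :=
  List.eq_nil_iff_forall_not_mem.2 fun w hw => hI w hw (List.flatten_eq_nil_iff.1 h w hw)

theorem isSentence_flattenWS (I : Sentence A) : IsSentence (flattenWS I) := by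
  intro w hw
  simpa using (List.mem_filter.1 hw).2

theorem IsSentence.flattenWS_eq {I : Sentence A} (hI : IsSentence I) : flattenWS I = I :=
  List.filter_eq_self.2 fun w hw => by simpa using hI w hw

theorem flattenWS_append (I J : Sentence A) :
    flattenWS (I ++ J) = flattenWS I ++ flattenWS J :=
  List.filter_append _ _

end Words

section Refinements

variable {A : Type*}

/-- The sentences whose concatenation is a given word, enumerated by splitting off the last
word. -/
def wordRefinements (w : List A) : List (Sentence A) :=
  if w = [] then [[]]
  else (List.range w.length).attach.flatMap fun t =>
    (wordRefinements (w.take t.1)).map (· ++ [w.drop t.1])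
termination_by w.length
decreasing_by
  have := List.mem_range.1 t.2
  simpa using this

theorem wordRefinements_nil : wordRefinements ([] : List A) = [[]] := by
  rw [wordRefinements, if_pos rfl]

theorem wordRefinements_of_ne_nil {w : List A} (hw : w ≠ []) :
    wordRefinements w = (List.range w.length).flatMap fun t =>
      (wordRefinements (w.take t)).map (· ++ [w.drop t]) := by
  rw [wordRefinements, if_neg hw]
  conv_rhs => rw [← List.attach_map_subtype_val (List.range w.length), List.flatMap_map]

theorem nil_mem_wordRefinements {w : List A} : [] ∈ wordRefinements w ↔ w = [] := by
  by_cases hw : w = []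
  · simp [hw, wordRefinements_nil]
  · simp [hw, wordRefinements_of_ne_nil hw]

theorem append_singleton_mem_wordRefinements {w b : List A} {Q : Sentence A} :
    Q ++ [b] ∈ wordRefinements w ↔
      ∃ t < w.length, Q ∈ wordRefinements (w.take t) ∧ w.drop t = b := by
  by_cases hw : w = []
  · simp [hw, wordRefinements_nil]
  · simp only [wordRefinements_of_ne_nil hw, List.mem_flatMap, List.mem_range, List.mem_map]
    constructor
    · rintro ⟨t, ht, R, hR, h⟩
      obtain ⟨rfl, hb⟩ := List.append_inj' h rfl
      exact ⟨t, ht, hR, List.singleton_inj.1 hb⟩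
    · rintro ⟨t, ht, hQ, rfl⟩
      exact ⟨t, ht, Q, hQ, rfl⟩

theorem mem_wordRefinements {w : List A} {Q : Sentence A} :
    Q ∈ wordRefinements w ↔ IsSentence Q ∧ Q.flatten = w := by
  induction Q using List.reverseRecOn generalizing w with
  | nil => simp [nil_mem_wordRefinements, isSentence_nil, eq_comm]
  | append_singleton Q b ih =>
    simp only [append_singleton_mem_wordRefinements, ih, isSentence_append, List.flatten_append,
      List.flatten_singleton]
    constructor
    · rintro ⟨t, ht, ⟨hQ, hQw⟩, rfl⟩
      refine ⟨⟨hQ, isSentence_cons.2 ⟨?_, isSentence_nil⟩⟩, by rw [hQw, List.take_append_drop]⟩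
      simpa using ht
    · rintro ⟨⟨hQ, hb⟩, rfl⟩
      have hb : b ≠ [] := (isSentence_cons.1 hb).1
      refine ⟨Q.flatten.length, ?_, ⟨hQ, by simp⟩, by simp⟩
      simpa [List.length_pos_iff] using hb

theorem nodup_wordRefinements (w : List A) : (wordRefinements w).Nodup := by
  by_cases hw : w = []
  · simp [hw, wordRefinements_nil]
  · rw [wordRefinements_of_ne_nil hw, List.nodup_flatMap]
    constructor
    · intro t ht
      have : t < w.length := List.mem_range.1 ht
      exact (nodup_wordRefinements _).map fun _ _ h => List.append_cancel_right h
    · refine List.Pairwise.imp_of_mem ?_ List.pairwise_lt_range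
      intro t t' ht ht' htt' Q hQ hQ'
      obtain ⟨Q₁, _, rfl⟩ := List.mem_map.1 hQ
      obtain ⟨Q₂, _, h⟩ := List.mem_map.1 hQ'
      have hdrop := congrArg List.length (List.singleton_inj.1 (List.append_inj' h rfl).2)
      simp only [List.length_drop, List.mem_range] at hdrop ht ht'
      omega
termination_by w.length

/-- The refinements of a sentence, obtained by refining each of its words. -/
def sentenceRefinements : Sentence A → List (Sentence A)
  | [] => [[]]
  | s :: S => (wordRefinements s).flatMap fun Q => (sentenceRefinements S).map (Q ++ ·)

theorem refines_nil_iff {Q : Sentence A} : Refines Q [] ↔ Q = [] := by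
  simp [Refines, eq_comm]

theorem refines_cons_iff {Q S : Sentence A} {s : List A} :
    Refines Q (s :: S) ↔ ∃ Q₁ Q₂, Q₁ ≠ [] ∧ Q₁.flatten = s ∧ Refines Q₂ S ∧ Q₁ ++ Q₂ = Q := by
  constructor
  · rintro ⟨_ | ⟨p, P⟩, hP, rfl, hPS⟩
    · simp at hPS
    · obtain ⟨hs, hS⟩ := List.cons.inj hPS
      obtain ⟨hp, hP⟩ := List.forall_mem_cons.1 hP
      exact ⟨p, P.flatten, hp, hs, ⟨P, hP, rfl, hS⟩, rfl⟩
  · rintro ⟨Q₁, _, hQ₁, rfl, ⟨P, hP, rfl, rfl⟩, rfl⟩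
    exact ⟨Q₁ :: P, List.forall_mem_cons.2 ⟨hQ₁, hP⟩, rfl, rfl⟩

theorem mem_sentenceRefinements {Q S : Sentence A} (hS : IsSentence S) :
    Q ∈ sentenceRefinements S ↔ IsSentence Q ∧ Refines Q S := by
  induction S generalizing Q with
  | nil =>
    simp only [sentenceRefinements, List.mem_singleton, refines_nil_iff]
    exact ⟨fun h => ⟨h ▸ isSentence_nil, h⟩, And.right⟩
  | cons s S ih =>
    obtain ⟨hs, hS⟩ := isSentence_cons.1 hS
    simp only [sentenceRefinements, List.mem_flatMap, List.mem_map, mem_wordRefinements, ih hS,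
      refines_cons_iff]
    constructor
    · rintro ⟨Q₁, ⟨hQ₁, rfl⟩, Q₂, ⟨hQ₂, hr⟩, rfl⟩
      exact ⟨isSentence_append.2 ⟨hQ₁, hQ₂⟩, Q₁, Q₂, by rintro rfl; exact hs rfl, rfl, hr, rfl⟩
    · rintro ⟨hQ, Q₁, Q₂, _, hs, hr, rfl⟩
      obtain ⟨hQ₁, hQ₂⟩ := isSentence_append.1 hQ
      exact ⟨Q₁, ⟨hQ₁, hs⟩, Q₂, ⟨hQ₂, hr⟩, rfl⟩

theorem IsSentence.eq_of_append_eq_append {Q Q' R R' : Sentence A} (hQ : IsSentence Q)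
    (hQ' : IsSentence Q') (hflatten : Q.flatten = Q'.flatten) (h : Q ++ R = Q' ++ R') :
    Q = Q' := by
  rcases List.append_eq_append_iff.1 h with ⟨a, rfl, _⟩ | ⟨a, rfl, _⟩
  · have ha := (isSentence_append.1 hQ').2.eq_nil_of_flatten_eq_nil (by simpa using hflatten)
    simp [ha]
  · have ha := (isSentence_append.1 hQ).2.eq_nil_of_flatten_eq_nil (by simpa using hflatten)
    simp [ha]

theorem nodup_sentenceRefinements (S : Sentence A) : (sentenceRefinements S).Nodup := by
  induction S with
  | nil => simp [sentenceRefinements]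
  | cons s S ih =>
    rw [sentenceRefinements, List.nodup_flatMap]
    constructor
    · intro Q _
      exact ih.map fun _ _ h => List.append_cancel_left h
    · refine List.Pairwise.imp_of_mem ?_ (nodup_wordRefinements s)
      intro Q Q' hQ hQ' hne R hR hR'
      obtain ⟨hQ, hQs⟩ := mem_wordRefinements.1 hQ
      obtain ⟨hQ', hQs'⟩ := mem_wordRefinements.1 hQ'
      obtain ⟨R₁, _, rfl⟩ := List.mem_map.1 hR
      obtain ⟨R₂, _, h⟩ := List.mem_map.1 hR'
      exact hne (hQ.eq_of_append_eq_append hQ' (hQs.trans hQs'.symm) h.symm)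

theorem sentenceRefinements_flattenWS (S : Sentence A) :
    sentenceRefinements (flattenWS S) = sentenceRefinements S := by
  induction S with
  | nil => rfl
  | cons s S ih =>
    rcases s with _ | ⟨a, s⟩
    · simpa [flattenWS, sentenceRefinements, wordRefinements_nil] using ih
    · simpa [flattenWS, sentenceRefinements] using
        congrArg (fun L => (wordRefinements (a :: s)).flatMap fun Q => L.map (Q ++ ·)) ih

theorem sum_sentenceRefinements_append_singleton {M : Type*} [AddCommMonoid M] (S : Sentence A)
    (s : List A) (f : Sentence A → M) :
    ((sentenceRefinements (S ++ [s])).map f).sum =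
      ((wordRefinements s).map fun Q =>
        ((sentenceRefinements S).map fun R => f (R ++ Q)).sum).sum := by
  induction S generalizing f with
  | nil => simp [sentenceRefinements]
  | cons r S ih =>
    simp only [List.cons_append, sentenceRefinements, sum_map_flatMap, List.map_map,
      Function.comp_def]
    simp only [ih fun x => f (_ ++ x), List.append_assoc]
    exact sum_map_sum_map_comm _ _ _

end Refinements

section SignedSums

variable {A M : Type*} [AddCommGroup M]

/-- The sum of `(-1)^ℓ(Q) F(w(Q^r))` over the sentences `Q` concatenating to `w`, with values in
any abelian group. -/
def signedRefinementSum (w : List A) (F : List A → M) : M :=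
  ((wordRefinements w).map fun Q => (-1 : ℤ) ^ Q.length • F Q.reverse.flatten).sum

theorem signedRefinementSum_nil (F : List A → M) : signedRefinementSum [] F = F [] := by
  simp [signedRefinementSum, wordRefinements_nil]

theorem signedRefinementSum_of_ne_nil {w : List A} (hw : w ≠ []) (F : List A → M) :
    signedRefinementSum w F =
      -∑ t ∈ Finset.range w.length,
        signedRefinementSum (w.take t) fun u => F (w.drop t ++ u) := by
  rw [signedRefinementSum, wordRefinements_of_ne_nil hw, sum_map_flatMap, sum_map_range,
    ← Finset.sum_neg_distrib]
  refine Finset.sum_congr rfl fun t _ => ?_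
  rw [signedRefinementSum, ← neg_one_zsmul (List.sum _), List.smul_sum, List.map_map, List.map_map]
  refine congrArg List.sum (List.map_congr_left fun Q _ => ?_)
  simp [pow_succ]

theorem sum_signedRefinementSum_take (w : List A) (F : List A → M) :
    ∑ t ∈ Finset.range (w.length + 1),
        signedRefinementSum (w.take t) (fun u => F (w.drop t ++ u)) =
      if w = [] then F [] else 0 := by
  split_ifs with hw
  · simp [hw, signedRefinementSum_nil]
  · simp [Finset.sum_range_succ, signedRefinementSum_of_ne_nil hw]

end SignedSums

section Splits

variable {A M : Type*} [AddCommMonoid M]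

theorem length_of_mem_splitsOf {I : Sentence A} {p : Sentence A × Sentence A}
    (hp : p ∈ splitsOf I) : p.1.length = I.length ∧ p.2.length = I.length := by
  induction I generalizing p with
  | nil => simp_all [splitsOf]
  | cons w I ih =>
    simp only [splitsOf, List.mem_flatten, List.mem_map, exists_exists_and_eq_and] at hp
    obtain ⟨q, hq, t, _, rfl⟩ := hp
    simpa using ih hq

theorem sum_splitsOf_cons (w : List A) (I : Sentence A) (f : Sentence A × Sentence A → M) :
    ((splitsOf (w :: I)).map f).sum =
      ((splitsOf I).map fun p =>
        ∑ t ∈ Finset.range (w.length + 1), f (w.take t :: p.1, w.drop t :: p.2)).sum := by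
  rw [splitsOf, ← List.flatMap_def, sum_map_flatMap]
  simp only [List.map_map, ← sum_map_range, Function.comp_def]

theorem sum_splitsOf_append_singleton (I : Sentence A) (w : List A)
    (f : Sentence A × Sentence A → M) :
    ((splitsOf (I ++ [w])).map f).sum =
      ∑ t ∈ Finset.range (w.length + 1),
        ((splitsOf I).map fun p => f (p.1 ++ [w.take t], p.2 ++ [w.drop t])).sum := by
  induction I generalizing f with
  | nil => rw [List.nil_append, sum_splitsOf_cons]; simp [splitsOf]
  | cons v I ih =>
    simp only [List.cons_append, sum_splitsOf_cons, ih]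

end Splits

section BernsteinSums

variable {A R : Type*} [Ring R]

/-- The contribution of the coproduct term `H_K ⊗ H_S` to the Bernstein operator `𝔹_v`, with
the generators `H_w` replaced by arbitrary elements `h w` of a ring. Since `⟨M_T, H_S⟩ = δ_{T,S}`,
the sum over the coarsenings `T` of `Q` leaves the `Q` that refine `S`. -/
def bernsteinTerm (h : List A → R) (v : List A) (K S : Sentence A) : R :=
  ((sentenceRefinements S).map fun Q =>
    (-1 : ℤ) ^ Q.length • (h (v ++ Q.reverse.flatten) * (K.map h).prod)).sum

/-- The value of the Bernstein operator `𝔹_v` on `H_I`, with the generators `H_w` replaced by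
arbitrary elements `h w` of a ring. -/
def bernsteinSum (h : List A → R) (v : List A) (I : Sentence A) : R :=
  ((splitsOf I).map fun p => bernsteinTerm h v p.1 p.2).sum

variable (h : List A → R)

theorem bernsteinTerm_append_singleton (v : List A) (K S : Sentence A) (x s : List A) :
    bernsteinTerm h v (K ++ [x]) (S ++ [s]) =
      signedRefinementSum s fun u => bernsteinTerm h (v ++ u) K S * h x := by
  rw [bernsteinTerm, sum_sentenceRefinements_append_singleton, signedRefinementSum]
  refine congrArg List.sum (List.map_congr_left fun Q _ => ?_)
  rw [bernsteinTerm, ← List.sum_map_mul_right, List.smul_sum, List.map_map]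
  refine congrArg List.sum (List.map_congr_left fun T _ => ?_)
  simp only [List.length_append, List.reverse_append, List.flatten_append, List.map_append,
    List.map_singleton, List.prod_append, List.prod_singleton, List.append_assoc, pow_add,
    mul_comm ((-1 : ℤ) ^ T.length), mul_smul, smul_mul_assoc, mul_assoc,
    Function.comp_apply]

theorem bernsteinSum_append_singleton (v : List A) (I : Sentence A) (w : List A) :
    bernsteinSum h v (I ++ [w]) =
      ∑ t ∈ Finset.range (w.length + 1),
        signedRefinementSum (w.drop t) fun u => bernsteinSum h (v ++ u) I * h (w.take t) := by
  rw [bernsteinSum, sum_splitsOf_append_singleton]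
  refine Finset.sum_congr rfl fun t _ => ?_
  simp only [bernsteinTerm_append_singleton, signedRefinementSum, bernsteinSum]
  rw [sum_map_sum_map_comm]
  simp only [← List.sum_map_mul_right, List.smul_sum, List.map_map, Function.comp_def]

theorem bernsteinSum_mul (v : List A) (I : Sentence A) (w : List A) :
    bernsteinSum h v I * h w =
      ∑ t ∈ Finset.range (w.length + 1), bernsteinSum h (v ++ w.drop t) (I ++ [w.take t]) := by
  let G (s j : ℕ) : R := signedRefinementSum ((w.drop s).take j) fun u =>
    bernsteinSum h (v ++ ((w.drop s).drop j ++ u)) I * h (w.take s)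
  have hG : ∀ s ∈ Finset.range (w.length + 1), ∑ j ∈ Finset.range (w.length + 1 - s), G s j =
      if s = w.length then bernsteinSum h v I * h w else 0 := by
    intro s hs
    have hs : s ≤ w.length := Finset.mem_range_succ_iff.1 hs
    have hcancel := sum_signedRefinementSum_take (w.drop s)
      fun u => bernsteinSum h (v ++ u) I * h (w.take s)
    rw [List.length_drop, ← Nat.sub_add_comm hs] at hcancel
    rw [hcancel]
    by_cases h : s = w.length
    · simp [h]
    · rw [if_neg h, if_neg]
      rw [List.drop_eq_nil_iff]
      omega
  calc bernsteinSum h v I * h w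
      = ∑ s ∈ Finset.range (w.length + 1), ∑ j ∈ Finset.range (w.length + 1 - s), G s j := by
        rw [Finset.sum_congr rfl hG, Finset.sum_ite_eq', if_pos (Finset.self_mem_range_succ _)]
    _ = ∑ t ∈ Finset.range (w.length + 1), ∑ s ∈ Finset.range (t + 1), G s (t - s) :=
        (Finset.sum_range_diag_flip _ G).symm
    _ = ∑ t ∈ Finset.range (w.length + 1), bernsteinSum h (v ++ w.drop t) (I ++ [w.take t]) := by
        refine Finset.sum_congr rfl fun t ht => ?_
        have ht : t ≤ w.length := Finset.mem_range_succ_iff.1 ht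
        rw [bernsteinSum_append_singleton, List.length_take_of_le ht]
        refine Finset.sum_congr rfl fun s hs => ?_
        have hs : s ≤ t := Finset.mem_range_succ_iff.1 hs
        simp only [G, List.drop_take, List.take_take, List.drop_drop, List.append_assoc,
          Nat.add_sub_cancel' hs, min_eq_left hs]

end BernsteinSums

section Series

variable {A : Type*}

/-- The product `mulN` of series as a bilinear map. -/
def mulNBilin : NSymA A →ₗ[ℚ] NSymA A →ₗ[ℚ] NSymA A :=
  LinearMap.mk₂ ℚ mulN
    (fun f g k => by funext I; simp [mulN, add_mul, Finset.sum_add_distrib])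
    (fun c f g => by funext I; simp [mulN, Finset.mul_sum, mul_assoc])
    (fun f g k => by funext I; simp [mulN, mul_add, Finset.sum_add_distrib])
    (fun c f g => by funext I; simp [mulN, Finset.mul_sum, mul_left_comm])

theorem mulNBilin_apply (f g : NSymA A) : mulNBilin f g = mulN f g :=
  rfl

theorem mulN_Hd (I J : Sentence A) : mulN (Hd I) (Hd J) = Hd (I ++ J) := by
  classical
  funext K
  have hsplit (j : ℕ) (hj : j ≤ K.length) :
      K.take j = I ∧ K.drop j = J ↔ j = I.length ∧ K = I ++ J := by
    constructor
    · rintro ⟨rfl, rfl⟩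
      simp [hj]
    · rintro ⟨rfl, rfl⟩
      simp
  simp only [mulN, Hd, ← ite_and, ite_mul, one_mul, zero_mul]
  rw [Finset.sum_congr rfl fun j hj => if_congr (hsplit j (Finset.mem_range_succ_iff.1 hj)) rfl rfl]
  by_cases hK : K = I ++ J <;> simp [hK]

theorem Hw_eq_Hd (w : List A) : Hw w = Hd (flattenWS [w]) := by
  cases w <;> simp [Hw, flattenWS]

end Series

section Duality

variable {A : Type*}

theorem restrictMono_fst {ws : Sentence A} {js : List ℕ} (hlen : ws.length = js.length) :
    (restrictMono ws js).1 = flattenWS ws := by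
  have hzip : (ws.zip js).map Prod.fst = ws := List.map_fst_zip hlen.le
  conv_rhs => rw [← hzip, flattenWS, List.filter_map]
  rfl

theorem validMono_restrictMono {ws : Sentence A} {js : List ℕ} (hlen : ws.length = js.length)
    (hjs : js.Pairwise (· < ·)) (hpos : ∀ j ∈ js, 1 ≤ j) : ValidMono (restrictMono ws js) := by
  have hsub : (restrictMono ws js).2.Sublist js := by
    conv_rhs => rw [← List.map_snd_zip hlen.ge]
    exact List.filter_sublist.map _
  refine ⟨by simp [restrictMono], (hjs.sublist hsub).isChain, fun j hj => hpos j (hsub.subset hj),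
    ?_⟩
  rw [restrictMono_fst hlen]
  exact isSentence_flattenWS ws

open Classical in
theorem MQ_restrictMono_range' (K ws : Sentence A) :
    MQ K (restrictMono ws (List.range' 1 ws.length)) = if flattenWS ws = K then 1 else 0 := by
  have hlen : ws.length = (List.range' 1 ws.length).length := List.length_range'.symm
  have hvalid := validMono_restrictMono hlen List.pairwise_lt_range'
    fun j hj => (List.mem_range'_1.1 hj).1
  simp only [MQ, hvalid, and_true, restrictMono_fst hlen]

theorem mulQ_MQ_range' (K S I : Sentence A) :
    mulQ (MQ K) (MQ S) (I, List.range' 1 I.length) =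
      ((splitsOf I).map fun p =>
        Finsupp.single (flattenWS p.1, flattenWS p.2) (1 : ℚ)).sum (K, S) := by
  classical
  rw [← Finsupp.applyAddHom_apply, map_list_sum, List.map_map, mulQ]
  refine congrArg List.sum (List.map_congr_left fun p hp => ?_)
  obtain ⟨h₁, h₂⟩ := length_of_mem_splitsOf hp
  have hK := MQ_restrictMono_range' K p.1
  have hS := MQ_restrictMono_range' S p.2
  rw [h₁] at hK
  rw [h₂] at hS
  by_cases h : flattenWS p.1 = K <;> simp [hK, hS, Finsupp.single_apply, h]

end Duality

/-- The algebra `NSym_A`, free on generators indexed by the nonempty words. -/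
abbrev NSym (A : Type*) := MonoidAlgebra ℚ (FreeMonoid {w : List A // w ≠ []})

namespace NSym

variable {A M : Type*} [AddCommGroup M] [Module ℚ M]

/-- The sentence underlying a monomial in the generators of `NSym A`. -/
def sentence (I : FreeMonoid {w : List A // w ≠ []}) : Sentence A :=
  I.toList.map (↑)

theorem isSentence_sentence (I : FreeMonoid {w : List A // w ≠ []}) : IsSentence (sentence I) := by
  intro w hw
  obtain ⟨u, _, rfl⟩ := List.mem_map.1 hw
  exact u.2

theorem sentence_mul (I J : FreeMonoid {w : List A // w ≠ []}) :
    sentence (I * J) = sentence I ++ sentence J := by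
  simp [sentence]

/-- The generator `H_w` of `NSym A`, with `H_∅ = 1`. -/
noncomputable def h (w : List A) : NSym A :=
  if hw : w = [] then 1 else MonoidAlgebra.of ℚ _ (FreeMonoid.of ⟨w, hw⟩)

theorem h_nil : h ([] : List A) = 1 :=
  dif_pos rfl

theorem prod_map_h_flattenWS (K : Sentence A) :
    ((flattenWS K).map h).prod = (K.map h).prod := by
  induction K with
  | nil => rfl
  | cons w K ih =>
    rw [← List.singleton_append, flattenWS_append, List.map_append, List.prod_append, ih]
    cases w <;> simp [flattenWS, h_nil]

/-- The linear map on `NSym A` with prescribed values on the basis `H_I`. -/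
noncomputable def basisLift (f : Sentence A → M) : NSym A →ₗ[ℚ] M :=
  Finsupp.linearCombination ℚ (f ∘ sentence) ∘ₗ (MonoidAlgebra.coeffLinearEquiv ℚ).toLinearMap

theorem basisLift_of (f : Sentence A → M) (I : FreeMonoid {w : List A // w ≠ []}) :
    basisLift f (MonoidAlgebra.of ℚ _ I) = f (sentence I) := by
  simp [basisLift]

theorem linearMap_ext {f g : NSym A →ₗ[ℚ] M}
    (hfg : ∀ I, f (MonoidAlgebra.of ℚ _ I) = g (MonoidAlgebra.of ℚ _ I)) : f = g :=
  MonoidAlgebra.lhom_ext' fun I => LinearMap.ext_ring (hfg I)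

/-- The embedding of `NSym A` into the series on which `Bern` and `mulN` act. Outside its image the
`finsum`s in `Bern` may have infinite support, so that `Bern` is not additive there. -/
noncomputable def toSeries : NSym A →ₗ[ℚ] NSymA A :=
  basisLift Hd

theorem toSeries_one : toSeries (1 : NSym A) = Hd [] :=
  basisLift_of Hd 1

theorem toSeries_mul (x y : NSym A) : toSeries (x * y) = mulN (toSeries x) (toSeries y) := by
  suffices (LinearMap.mul ℚ (NSym A)).compr₂ toSeries = mulNBilin.compl₁₂ toSeries toSeries from
    LinearMap.congr_fun₂ this x y
  refine linearMap_ext fun I => linearMap_ext fun J => ?_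
  simp only [LinearMap.compr₂_apply, LinearMap.mul_apply', LinearMap.compl₁₂_apply, ← map_mul,
    toSeries, basisLift_of, sentence_mul]
  exact (mulN_Hd _ _).symm

theorem toSeries_h (w : List A) : toSeries (h w) = Hw w := by
  rw [Hw_eq_Hd]
  by_cases hw : w = []
  · simp [hw, h_nil, toSeries_one, flattenWS]
  · rw [h, dif_neg hw, toSeries, basisLift_of]
    simp [sentence, flattenWS, hw]

theorem toSeries_prod_map_h {K : Sentence A} (hK : IsSentence K) :
    toSeries (K.map h).prod = Hd K := by
  induction K with
  | nil => exact toSeries_one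
  | cons w K ih =>
    obtain ⟨hw, hK⟩ := isSentence_cons.1 hK
    rw [List.map_cons, List.prod_cons, toSeries_mul, ih hK, toSeries_h, Hw,
      if_neg (by simpa using hw), mulN_Hd, List.singleton_append]

/-- The coproduct of `NSym A`, dual to the product of `QSym_A`, in the basis `H_K ⊗ H_S`. -/
noncomputable def coproduct : NSym A →ₗ[ℚ] (Sentence A × Sentence A →₀ ℚ) :=
  basisLift fun I =>
    ((splitsOf I).map fun p => Finsupp.single (flattenWS p.1, flattenWS p.2) 1).sum

theorem coproduct_mem_supported (x : NSym A) :
    coproduct x ∈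
      Finsupp.supported ℚ ℚ {d : Sentence A × Sentence A | IsSentence d.1 ∧ IsSentence d.2} := by
  induction x using MonoidAlgebra.induction_on with
  | of I =>
    rw [coproduct, basisLift_of]
    refine list_sum_mem fun f hf => ?_
    obtain ⟨p, _, rfl⟩ := List.mem_map.1 hf
    exact Finsupp.single_mem_supported ℚ _ ⟨isSentence_flattenWS _, isSentence_flattenWS _⟩
  | add x y hx hy =>
    rw [map_add]
    exact add_mem hx hy
  | smul c x hx =>
    rw [map_smul]
    exact Submodule.smul_mem _ c hx

theorem isSentence_of_mem_support_coproduct {x : NSym A} {d : Sentence A × Sentence A}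
    (hd : d ∈ (coproduct x).support) : IsSentence d.1 ∧ IsSentence d.2 :=
  (Finsupp.mem_supported _ _).1 (coproduct_mem_supported x) hd

theorem pairNQ_toSeries (x : NSym A) (F : QSymA A) :
    pairNQ (toSeries x) F = basisLift (fun I => F (I, List.range' 1 I.length)) x := by
  classical
  have hterm (I : Sentence A) : toSeries x I * F (I, List.range' 1 I.length) =
      ∑ J ∈ x.coeff.support, if sentence J = I then
        x.coeff J * F (I, List.range' 1 I.length) else 0 := by
    simp [toSeries, basisLift, Finsupp.linearCombination_apply, Finsupp.sum, Hd, Finset.sum_mul,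
      eq_comm]
  simp only [pairNQ, hterm]
  rw [finsum_mem_sum_ite (L := fun J => {sentence J})]
  · simp [basisLift, Finsupp.linearCombination_apply, Finsupp.sum]
  · intro J _ I
    simp only [Finset.mem_singleton, Set.mem_ofPred_eq]
    exact ⟨by rintro rfl; exact ⟨isSentence_sentence J, rfl⟩, fun h => h.2.symm⟩

theorem pairNQ_toSeries_mulQ_MQ (x : NSym A) (K S : Sentence A) :
    pairNQ (toSeries x) (mulQ (MQ K) (MQ S)) = coproduct x (K, S) := by
  rw [pairNQ_toSeries]
  suffices basisLift (fun I => mulQ (MQ K) (MQ S) (I, List.range' 1 I.length)) =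
      Finsupp.lapply (K, S) ∘ₗ coproduct from LinearMap.congr_fun this x
  refine linearMap_ext fun I => ?_
  simp only [LinearMap.comp_apply, Finsupp.lapply_apply, coproduct, basisLift_of, mulQ_MQ_range']

open Classical in
theorem rperp_MQ_toSeries (x : NSym A) (S : Sentence A) :
    rperp (MQ S) (toSeries x) =
      ∑ d ∈ (coproduct x).support, if d.2 = S then coproduct x d • Hd d.1 else 0 := by
  have hterm (K : Sentence A) : pairNQ (toSeries x) (mulQ (MQ K) (MQ S)) • Hd K =
      ∑ d ∈ (coproduct x).support, if d.1 = K then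
        (if d.2 = S then coproduct x d • Hd d.1 else 0) else 0 := by
    simp only [pairNQ_toSeries_mulQ_MQ, ← ite_and, ← Prod.ext_iff (y := (K, S))]
    rw [Finset.sum_ite_eq']
    split_ifs with h
    · rfl
    · rw [Finsupp.notMem_support_iff.1 h, zero_smul]
  simp only [rperp, hterm]
  rw [finsum_mem_sum_ite (L := fun d => {d.1})]
  · simp
  · intro d hd K
    simp only [Finset.mem_singleton, Set.mem_ofPred_eq]
    exact ⟨by rintro rfl; exact ⟨(isSentence_of_mem_support_coproduct hd).1, rfl⟩,
      fun h => h.2.symm⟩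

open Classical in
theorem finsum_rperp_MQ_toSeries (x : NSym A) (Q : Sentence A) :
    ∑ᶠ S ∈ {S | Refines Q S}, rperp (MQ S) (toSeries x) =
      ∑ d ∈ (coproduct x).support, if Refines Q d.2 then coproduct x d • Hd d.1 else 0 := by
  simp only [rperp_MQ_toSeries]
  rw [finsum_mem_sum_ite (L := fun d => if Refines Q d.2 then {d.2} else ∅)]
  · refine Finset.sum_congr rfl fun d _ => ?_
    split_ifs <;> simp
  · intro d _ S
    split_ifs with h
    · simp only [Finset.mem_singleton, Set.mem_ofPred_eq]
      exact ⟨by rintro rfl; exact ⟨h, rfl⟩, fun hS => hS.2.symm⟩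
    · simp only [Finset.notMem_empty, Set.mem_ofPred_eq, false_iff]
      rintro ⟨hS, rfl⟩
      exact h hS

/-- The Bernstein operator `𝔹_v` on `NSym A`, computed through the coproduct. -/
noncomputable def bernstein (v : List A) : NSym A →ₗ[ℚ] NSym A :=
  Finsupp.linearCombination ℚ (fun d => bernsteinTerm h v d.1 d.2) ∘ₗ coproduct

theorem bernstein_of (v : List A) (I : FreeMonoid {w : List A // w ≠ []}) :
    bernstein v (MonoidAlgebra.of ℚ _ I) = bernsteinSum h v (sentence I) := by
  rw [bernstein, LinearMap.comp_apply, coproduct, basisLift_of, map_list_sum, List.map_map,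
    bernsteinSum]
  refine congrArg List.sum (List.map_congr_left fun p _ => ?_)
  simp [bernsteinTerm, sentenceRefinements_flattenWS, prod_map_h_flattenWS]

theorem Bern_toSeries (v : List A) (x : NSym A) :
    Bern v (toSeries x) = toSeries (bernstein v x) := by
  classical
  have hterm (Q : Sentence A) :
      (-1 : ℚ) ^ Q.length • mulN (Hw (v ++ Q.reverse.flatten))
          (∑ᶠ S ∈ {S | Refines Q S}, rperp (MQ S) (toSeries x)) =
        ∑ d ∈ (coproduct x).support, if Refines Q d.2 then
          coproduct x d •
            toSeries ((-1 : ℤ) ^ Q.length • (h (v ++ Q.reverse.flatten) * (d.1.map h).prod))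
          else 0 := by
    rw [finsum_rperp_MQ_toSeries, ← mulNBilin_apply, map_sum, Finset.smul_sum]
    refine Finset.sum_congr rfl fun d hd => ?_
    have hd := (isSentence_of_mem_support_coproduct hd).1
    split_ifs
    · rw [map_smul, mulNBilin_apply, ← toSeries_h, ← toSeries_prod_map_h hd, ← toSeries_mul,
        smul_comm, ← Int.cast_smul_eq_zsmul ℚ, map_smul]
      push_cast
      rfl
    · rw [map_zero, smul_zero]
  simp only [Bern, hterm]
  rw [finsum_mem_sum_ite (L := fun d => (sentenceRefinements d.2).toFinset)]
  · simp only [bernstein, LinearMap.comp_apply, Finsupp.linearCombination_apply, Finsupp.sum,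
      map_sum, map_smul, bernsteinTerm, map_list_sum]
    refine Finset.sum_congr rfl fun d _ => ?_
    rw [List.sum_toFinset _ (nodup_sentenceRefinements _), List.smul_sum, List.map_map,
      List.map_map]
    rfl
  · intro d hd Q
    rw [List.mem_toFinset, mem_sentenceRefinements (isSentence_of_mem_support_coproduct hd).2]
    rfl

theorem bernstein_of_mul_h (v : List A) (I : FreeMonoid {w : List A // w ≠ []}) (w : List A) :
    bernstein v (MonoidAlgebra.of ℚ _ I * h w) = bernsteinSum h v (sentence I ++ [w]) := by
  by_cases hw : w = []
  · simp [hw, h_nil, bernstein_of, bernsteinSum_append_singleton, signedRefinementSum_nil,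
      -MonoidAlgebra.of_apply]
  · rw [h, dif_neg hw, ← map_mul, bernstein_of, sentence_mul]
    rfl

theorem bernstein_mul_h (v : List A) (x : NSym A) (w : List A) :
    bernstein v x * h w =
      ∑ t ∈ Finset.range (w.length + 1), bernstein (v ++ w.drop t) (x * h (w.take t)) := by
  suffices LinearMap.mulRight ℚ (h w) ∘ₗ bernstein v =
      ∑ t ∈ Finset.range (w.length + 1),
        bernstein (v ++ w.drop t) ∘ₗ LinearMap.mulRight ℚ (h (w.take t)) by
    simpa using LinearMap.congr_fun this x
  refine linearMap_ext fun I => ?_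
  simp only [LinearMap.comp_apply, LinearMap.sum_apply, LinearMap.mulRight_apply, bernstein_of,
    bernstein_of_mul_h, bernsteinSum_mul]

theorem bernstein_one (w : List A) : bernstein w 1 = h w := by
  rw [MonoidAlgebra.one_def, ← MonoidAlgebra.of_apply, bernstein_of]
  simp [sentence, bernsteinSum, splitsOf, bernsteinTerm, sentenceRefinements]

/-- The colored immaculate function `𝔖_J` as an element of `NSym A`. -/
noncomputable def immaculate (J : Sentence A) : NSym A :=
  J.foldr (fun v => bernstein v) 1

theorem immaculate_cons (v : List A) (J : Sentence A) :
    immaculate (v :: J) = bernstein v (immaculate J) :=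
  rfl

theorem toSeries_immaculate (J : Sentence A) : toSeries (immaculate J) = ImmS J := by
  induction J with
  | nil => exact toSeries_one
  | cons v J ih => rw [immaculate_cons, ← Bern_toSeries, ih]; rfl

end NSym

section Pieri

variable {A : Type*}

/-- The sentences `K` with `J ⊂_w K`, enumerated by the suffix of `w` appended to the first word
of `J`. -/
def pieriList : Sentence A → List A → List (Sentence A)
  | [], w => [flattenWS [w]]
  | v :: J, w => (List.range (w.length + 1)).flatMap fun t =>
      (pieriList J (w.take t)).map ((v ++ w.drop t) :: ·)

theorem nodup_pieriList (J : Sentence A) (w : List A) : (pieriList J w).Nodup := by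
  induction J generalizing w with
  | nil => exact List.nodup_singleton _
  | cons v J ih =>
    rw [pieriList, List.nodup_flatMap]
    constructor
    · intro t _
      exact (ih _).map fun _ _ h => (List.cons.inj h).2
    · refine List.Pairwise.imp_of_mem ?_ List.pairwise_lt_range
      intro t t' ht ht' htt' K hK hK'
      obtain ⟨K₁, _, rfl⟩ := List.mem_map.1 hK
      obtain ⟨K₂, _, h⟩ := List.mem_map.1 hK'
      have hdrop := congrArg List.length (List.append_cancel_left (List.cons.inj h).1)
      simp only [List.length_drop, List.mem_range] at hdrop ht ht'
      omega

theorem not_pieriRel_cons_nil (v : List A) (J : Sentence A) (w : List A) :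
    ¬PieriRel (v :: J) w [] :=
  fun h => Nat.not_succ_le_zero _ h.1

theorem pieriRel_nil {w : List A} {K : Sentence A} :
    PieriRel [] w K ↔ K = [] ∧ w = [] ∨ K = [w] := by
  constructor
  · rintro ⟨-, hK, q, hq, rfl, h⟩
    rcases K with _ | ⟨u, _ | ⟨u', K⟩⟩
    · simp [List.eq_nil_of_length_eq_zero hq]
    · obtain ⟨q₁, rfl⟩ := List.length_eq_one_iff.1 hq
      simpa using h 0
    · simp at hK
  · rintro (⟨rfl, rfl⟩ | rfl)
    · exact ⟨le_rfl, Nat.zero_le _, [], rfl, rfl, by simp⟩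
    · exact ⟨Nat.zero_le _, le_rfl, [w], rfl, by simp, by simp⟩

theorem pieriRel_cons_cons {v u w : List A} {J K : Sentence A} :
    PieriRel (v :: J) w (u :: K) ↔
      ∃ t < w.length + 1, PieriRel J (w.take t) K ∧ v ++ w.drop t = u := by
  constructor
  · rintro ⟨h₁, h₂, _ | ⟨q₀, q⟩, hq, rfl, h⟩
    · simp at hq
    · have hu : u = v ++ q₀ := by simpa using h 0 (Nat.succ_pos _)
      refine ⟨q.reverse.flatten.length, ?_, ⟨Nat.le_of_succ_le_succ h₁, Nat.le_of_succ_le_succ h₂,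
        q, Nat.succ.inj hq, by simp, fun j hj => ?_⟩, by simp [hu]⟩
      · simp only [List.reverse_cons, List.flatten_append, List.length_append]
        omega
      · simpa using h (j + 1) (Nat.succ_lt_succ hj)
  · rintro ⟨t, _, ⟨h₁, h₂, q, hq, hqw, h⟩, rfl⟩
    refine ⟨Nat.succ_le_succ h₁, Nat.succ_le_succ h₂, w.drop t :: q, congrArg Nat.succ hq,
      by simp [hqw], ?_⟩
    rintro (_ | j) hj
    · simp
    · simpa using h j (Nat.lt_of_succ_lt_succ hj)

theorem mem_pieriList {J K : Sentence A} {w : List A} (hJ : IsSentence J) :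
    K ∈ pieriList J w ↔ IsSentence K ∧ PieriRel J w K := by
  induction J generalizing K w with
  | nil =>
    rw [pieriList, List.mem_singleton, pieriRel_nil]
    constructor
    · rintro rfl
      refine ⟨isSentence_flattenWS _, ?_⟩
      cases w <;> simp [flattenWS]
    · rintro ⟨hK, ⟨rfl, rfl⟩ | rfl⟩
      · rfl
      · exact hK.flattenWS_eq.symm
  | cons v J ih =>
    obtain ⟨hv, hJ⟩ := isSentence_cons.1 hJ
    rcases K with _ | ⟨u, K⟩
    · simp [pieriList, not_pieriRel_cons_nil]
    · simp only [pieriList, List.mem_flatMap, List.mem_range, List.mem_map, List.cons.injEq, ih hJ,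
        isSentence_cons, pieriRel_cons_cons]
      constructor
      · rintro ⟨t, ht, _, ⟨hK, hJK⟩, rfl, rfl⟩
        exact ⟨⟨List.append_ne_nil_of_left_ne_nil hv _, hK⟩, t, ht, hJK, rfl⟩
      · rintro ⟨⟨_, hK⟩, t, ht, hJK, rfl⟩
        exact ⟨t, ht, K, ⟨hK, hJK⟩, rfl, rfl⟩

theorem NSym.immaculate_mul_h (J : Sentence A) (w : List A) :
    immaculate J * h w = ((pieriList J w).map immaculate).sum := by
  induction J generalizing w with
  | nil =>
    rw [immaculate, List.foldr_nil, one_mul, pieriList, List.map_singleton, List.sum_singleton]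
    cases w with
    | nil => exact h_nil
    | cons a w => exact (bernstein_one _).symm
  | cons v J ih =>
    simp only [immaculate_cons, bernstein_mul_h, ih, pieriList, sum_map_flatMap, sum_map_range,
      map_list_sum, List.map_map, Function.comp_def]

end Pieri

/-- Right Pieri rule for the colored immaculate functions.
For a sentence `J` and a word `w`, `𝔖_J · H_w = Σ_{J ⊂_w K} 𝔖_K`, summed over all
sentences `K` with `J ⊂_w K`. -/
theorem statement12 {A : Type*} (J : Sentence A) (hJ : IsSentence J) (w : List A) :
    mulN (ImmS J) (Hw w) =
      ∑ᶠ K ∈ {K : Sentence A | IsSentence K ∧ PieriRel J w K}, ImmS K := by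
  calc mulN (ImmS J) (Hw w)
      = NSym.toSeries (NSym.immaculate J * NSym.h w) := by
        rw [NSym.toSeries_mul, NSym.toSeries_immaculate, NSym.toSeries_h]
    _ = ((pieriList J w).map ImmS).sum := by
        rw [NSym.immaculate_mul_h, map_list_sum, List.map_map]
        exact congrArg List.sum (List.map_congr_left fun K _ => NSym.toSeries_immaculate K)
    _ = ∑ᶠ K ∈ {K : Sentence A | IsSentence K ∧ PieriRel J w K}, ImmS K :=
        (finsum_mem_eq_sum_map (nodup_pieriList J w) (fun _ => mem_pieriList hJ) ImmS).symm

end ColoredImm
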